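/- Let T > 0, λ > 0, F₁, F₂ ∈ C⁰([0,T]), and let y, N ∈ C¹([0,T]) be positive functions such that |½ y'(t) + N(t) y(t)| ≤ (C₀/(T−t+λ) + C₁) y(t) + F₁(t) y(t) and N'(t) ≤ ((1+C₀)/(T−t+λ) + C₁) N(t) + F₂(t) for all t, where C₀, C₁ ≥ 0. Then for any 0 ≤ t₁ < t₂ < t₃ ≤ T, y(t₂)^{1+M} ≤ y(t₃) y(t₁)^{M} e^{4D} ((T−t₁+λ)/(T−t₃+λ))^{2C₀(1+M)}, where M = (∫_{t₂}^{t₃} e^{tC₁}/(T−t+λ)^{1+C₀} dt) / (∫_{t₁}^{t₂} e^{tC₁}/(T−t+λ)^{1+C₀} dt) and D = M (t₂−t₁) (C₁ + sup_{[t₁,t₃]} |F₁| + ∫_{t₁}^{t₃} |F₂| dt). -/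

import Mathlib

open Real Set

noncomputable section

/-- The interpolation exponent
`M = (∫_{t₂}^{t₃} e^{tC₁}/(T−t+λ)^{1+C₀} dt) / (∫_{t₁}^{t₂} e^{tC₁}/(T−t+λ)^{1+C₀} dt)`. -/
def Mconst (T lam C₀ C₁ t₁ t₂ t₃ : ℝ) : ℝ :=
  (∫ t in t₂..t₃, Real.exp (t * C₁) / (T - t + lam) ^ (1 + C₀)) /
    (∫ t in t₁..t₂, Real.exp (t * C₁) / (T - t + lam) ^ (1 + C₀))

/-- `D = M (t₂−t₁) (C₁ + sup_{[t₁,t₃]} |F₁| + ∫_{t₁}^{t₃} |F₂| dt)`. -/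
def Dconst (T lam C₀ C₁ : ℝ) (F₁ F₂ : ℝ → ℝ) (t₁ t₂ t₃ : ℝ) : ℝ :=
  Mconst T lam C₀ C₁ t₁ t₂ t₃ * (t₂ - t₁) *
    (C₁ + sSup ((fun t => |F₁ t|) '' Icc t₁ t₃) + ∫ t in t₁..t₃, |F₂ t|)

theorem prim_aux (a b : ℝ) (hab : a ≤ b) (f : ℝ → ℝ) (hf : ContinuousOn f (Icc a b)) :
    ∃ W : ℝ → ℝ, (∀ t ∈ Icc a b, HasDerivAt W (f t) t) ∧
      ∀ u ∈ Icc a b, ∀ v ∈ Icc a b, ∫ t in u..v, f t = W v - W u := by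
  have hg : Continuous (IccExtend hab ((Icc a b).domRestrict f)) :=
    (continuousOn_iff_continuous_domRestrict.1 hf).Icc_extend'
  have heq : ∀ t ∈ Icc a b, IccExtend hab ((Icc a b).domRestrict f) t = f t := by
    intro t ht
    rw [IccExtend_of_mem _ _ ht]; rfl
  have hd : ∀ t ∈ Icc a b,
      HasDerivAt (fun x => ∫ s in a..x, IccExtend hab ((Icc a b).domRestrict f) s) (f t) t := by
    intro t ht
    have := hg.integral_hasStrictDerivAt a t
    rw [← heq t ht]
    exact this.hasDerivAt
  refine ⟨_, hd, ?_⟩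
  intro u hu v hv
  have hs : uIcc u v ⊆ Icc a b := ordConnected_Icc.uIcc_subset hu hv
  apply intervalIntegral.integral_eq_sub_of_hasDerivAt
  · intro x hx
    exact hd x (hs hx)
  · exact (hf.mono hs).intervalIntegrable

theorem mono_aux (a b : ℝ) (hab : a ≤ b) (f f' : ℝ → ℝ)
    (hf : ∀ t ∈ Icc a b, HasDerivAt f (f' t) t) (h : ∀ t ∈ Icc a b, 0 ≤ f' t) : f a ≤ f b := by
  have hm : MonotoneOn f (Icc a b) := by
    apply monotoneOn_of_deriv_nonneg (convex_Icc a b)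
    · intro t ht
      exact (hf t ht).continuousAt.continuousWithinAt
    · intro t ht
      exact (hf t (interior_subset ht)).differentiableAt.differentiableWithinAt
    · intro t ht
      rw [(hf t (interior_subset ht)).deriv]
      exact h t (interior_subset ht)
  exact hm (left_mem_Icc.2 hab) (right_mem_Icc.2 hab) hab

theorem observation_kinetic_lemma4_3
    (T lam C₀ C₁ : ℝ) (hT : 0 < T) (hlam : 0 < lam) (hC₀ : 0 ≤ C₀) (hC₁ : 0 ≤ C₁)
    (F₁ F₂ y N y' N' : ℝ → ℝ)
    (hF₁ : ContinuousOn F₁ (Icc 0 T)) (hF₂ : ContinuousOn F₂ (Icc 0 T))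
    (hy : ∀ t ∈ Icc (0:ℝ) T, HasDerivAt y (y' t) t) (hy' : ContinuousOn y' (Icc 0 T))
    (hN : ∀ t ∈ Icc (0:ℝ) T, HasDerivAt N (N' t) t) (hN' : ContinuousOn N' (Icc 0 T))
    (hypos : ∀ t ∈ Icc (0:ℝ) T, 0 < y t) (hNpos : ∀ t ∈ Icc (0:ℝ) T, 0 < N t)
    (hineq1 : ∀ t ∈ Icc (0:ℝ) T,
      |(1/2) * y' t + N t * y t| ≤ (C₀ / (T - t + lam) + C₁) * y t + F₁ t * y t)
    (hineq2 : ∀ t ∈ Icc (0:ℝ) T,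
      N' t ≤ ((1 + C₀) / (T - t + lam) + C₁) * N t + F₂ t)
    (t₁ t₂ t₃ : ℝ) (h01 : 0 ≤ t₁) (h12 : t₁ < t₂) (h23 : t₂ < t₃) (h3T : t₃ ≤ T) :
    y t₂ ^ (1 + Mconst T lam C₀ C₁ t₁ t₂ t₃) ≤
      y t₃ * y t₁ ^ Mconst T lam C₀ C₁ t₁ t₂ t₃ *
        Real.exp (4 * Dconst T lam C₀ C₁ F₁ F₂ t₁ t₂ t₃) *
        ((T - t₁ + lam) / (T - t₃ + lam)) ^ (2 * C₀ * (1 + Mconst T lam C₀ C₁ t₁ t₂ t₃)) := by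
  set M := Mconst T lam C₀ C₁ t₁ t₂ t₃ with hMdef
  have hr : ∀ t ∈ Icc t₁ t₃, 0 < T - t + lam := fun t ht => by linarith [ht.2]
  have hsub : Icc t₁ t₃ ⊆ Icc 0 T := Icc_subset_Icc h01 h3T
  have m1 : t₁ ∈ Icc t₁ t₃ := ⟨le_rfl, by linarith⟩
  have m2 : t₂ ∈ Icc t₁ t₃ := ⟨by linarith, by linarith⟩
  have m3 : t₃ ∈ Icc t₁ t₃ := ⟨by linarith, le_rfl⟩
  obtain ⟨w, hw⟩ : ∃ w : ℝ → ℝ, w = fun t => Real.exp (t * C₁) / (T - t + lam) ^ (1 + C₀) :=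
    ⟨_, rfl⟩
  have wpos : ∀ t ∈ Icc t₁ t₃, 0 < w t := by
    intro t ht
    rw [hw]
    have := Real.rpow_pos_of_pos (hr t ht) (1 + C₀)
    have := Real.exp_pos (t * C₁)
    positivity
  have wder : ∀ t ∈ Icc t₁ t₃,
      HasDerivAt w (((1 + C₀) / (T - t + lam) + C₁) * w t) t := by
    intro t ht
    have h0 := hr t ht
    have hp := Real.rpow_pos_of_pos h0 (1 + C₀)
    have d1 : HasDerivAt (fun t : ℝ => Real.exp (t * C₁)) (Real.exp (t * C₁) * (1 * C₁)) t :=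
      ((hasDerivAt_id t).mul_const C₁).exp
    have d2 : HasDerivAt (fun t : ℝ => T - t + lam) (-1) t := by
      simpa using ((hasDerivAt_id t).const_sub T).add_const lam
    have d3 := d2.rpow_const (p := 1 + C₀) (Or.inl h0.ne')
    have d4 := d1.div d3 hp.ne'
    rw [hw]
    refine d4.congr_deriv ?_
    have e : (T - t + lam) ^ (1 + C₀ - 1) = (T - t + lam) ^ (1 + C₀) / (T - t + lam) := by
      rw [Real.rpow_sub_one h0.ne']
    rw [e]
    field_simp
    ring
  have wmono : ∀ s ∈ Icc t₁ t₃, ∀ t ∈ Icc t₁ t₃, s ≤ t → w s ≤ w t := by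
    intro s hs t ht hst
    refine mono_aux s t hst w _ (fun x hx => wder x ⟨hs.1.trans hx.1, hx.2.trans ht.2⟩) ?_
    intro x hx
    have hx' : x ∈ Icc t₁ t₃ := ⟨hs.1.trans hx.1, hx.2.trans ht.2⟩
    have := wpos x hx'
    have := hr x hx'
    positivity
  have wcont : ContinuousOn w (Icc t₁ t₃) := fun t ht =>
    (wder t ht).continuousAt.continuousWithinAt
  obtain ⟨W, hWd, hWi⟩ := prim_aux t₁ t₃ (by linarith) w wcont
  obtain ⟨G, hGd, hGi⟩ := prim_aux t₁ t₃ (by linarith) (fun t => |F₂ t|) (hF₂.mono hsub).abs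
  obtain ⟨S, hS⟩ : ∃ S, S = sSup ((fun t => |F₁ t|) '' Icc t₁ t₃) := ⟨_, rfl⟩
  have hS1 : ∀ t ∈ Icc t₁ t₃, |F₁ t| ≤ S := by
    intro t ht
    rw [hS]
    exact le_csSup (isCompact_Icc.image_of_continuousOn (hF₁.mono hsub).abs).bddAbove
      (mem_image_of_mem _ ht)
  have hS0 : 0 ≤ S := (abs_nonneg _).trans (hS1 t₁ m1)
  obtain ⟨J, hJ⟩ : ∃ J, J = ∫ t in t₁..t₃, |F₂ t| := ⟨_, rfl⟩
  have hJG : J = G t₃ - G t₁ := by rw [hJ, hGi _ m1 _ m3]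
  have Gmono : ∀ s ∈ Icc t₁ t₃, ∀ t ∈ Icc t₁ t₃, s ≤ t → G s ≤ G t := by
    intro s hs t ht hst
    exact mono_aux s t hst G _ (fun x hx => hGd x ⟨hs.1.trans hx.1, hx.2.trans ht.2⟩)
      (fun x hx => abs_nonneg _)
  have hJ0 : 0 ≤ J := by rw [hJG]; linarith [Gmono _ m1 _ m3 (by linarith)]
  have hD : Dconst T lam C₀ C₁ F₁ F₂ t₁ t₂ t₃ = M * (t₂ - t₁) * (C₁ + S + J) := by
    rw [hS, hJ]; rfl
  have hI1 : (t₂ - t₁) * w t₁ ≤ W t₂ - W t₁ := by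
    have := mono_aux t₁ t₂ h12.le (fun t => W t - t * w t₁) (fun t => w t - 1 * w t₁)
      (fun t ht => (hWd t ⟨ht.1, by linarith [ht.2]⟩).sub ((hasDerivAt_id t).mul_const _))
      (fun t ht => by
        have := wmono _ m1 t ⟨ht.1, by linarith [ht.2]⟩ ht.1
        linarith)
    linarith
  have hI1' : W t₂ - W t₁ ≤ (t₂ - t₁) * w t₂ := by
    have := mono_aux t₁ t₂ h12.le (fun t => t * w t₂ - W t) (fun t => 1 * w t₂ - w t)
      (fun t ht => ((hasDerivAt_id t).mul_const _).sub (hWd t ⟨ht.1, by linarith [ht.2]⟩))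
      (fun t ht => by
        have := wmono t ⟨ht.1, by linarith [ht.2]⟩ _ m2 ht.2
        linarith)
    linarith
  have hI2 : (t₃ - t₂) * w t₂ ≤ W t₃ - W t₂ := by
    have := mono_aux t₂ t₃ h23.le (fun t => W t - t * w t₂) (fun t => w t - 1 * w t₂)
      (fun t ht => (hWd t ⟨by linarith [ht.1], ht.2⟩).sub ((hasDerivAt_id t).mul_const _))
      (fun t ht => by
        have := wmono _ m2 t ⟨by linarith [ht.1], ht.2⟩ ht.1
        linarith)
    linarith
  have hw2 := wpos _ m2
  have hI1pos : 0 < W t₂ - W t₁ :=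
    lt_of_lt_of_le (mul_pos (by linarith) (wpos _ m1)) hI1
  have hI2pos : 0 < W t₃ - W t₂ :=
    lt_of_lt_of_le (mul_pos (by linarith) hw2) hI2
  have hM : M = (W t₃ - W t₂) / (W t₂ - W t₁) := by
    rw [← hWi _ m1 _ m2, ← hWi _ m2 _ m3, hw]; rfl
  have hMI : M * (W t₂ - W t₁) = W t₃ - W t₂ := by
    rw [hM]; field_simp
  have hM0 : 0 < M := by rw [hM]; positivity
  -- comparison for N / w
  have key : ∀ s ∈ Icc t₁ t₃, ∀ t ∈ Icc t₁ t₃, s ≤ t → N t / w t ≤ N s / w s + J / w s := by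
    intro s hs t ht hst
    have hws := wpos s hs
    have := mono_aux s t hst (fun x => G x / w s - N x / w x)
      (fun x => |F₂ x| / w s -
        (N' x * w x - N x * (((1 + C₀) / (T - x + lam) + C₁) * w x)) / w x ^ 2)
      (fun x hx => by
        have hx' : x ∈ Icc t₁ t₃ := ⟨hs.1.trans hx.1, hx.2.trans ht.2⟩
        exact ((hGd x hx').div_const _).sub ((hN x (hsub hx')).div (wder x hx') (wpos x hx').ne'))
      (fun x hx => by
        have hx' : x ∈ Icc t₁ t₃ := ⟨hs.1.trans hx.1, hx.2.trans ht.2⟩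
        have hwx := wpos x hx'
        have h2 := hineq2 x (hsub hx')
        have e : (N' x * w x - N x * (((1 + C₀) / (T - x + lam) + C₁) * w x)) / w x ^ 2
            = (N' x - ((1 + C₀) / (T - x + lam) + C₁) * N x) / w x := by
          field_simp
        rw [e, sub_nonneg]
        calc _ ≤ |F₂ x| / w x := by
              apply div_le_div_of_nonneg_right _ hwx.le
              linarith [le_abs_self (F₂ x)]
          _ ≤ |F₂ x| / w s :=
              div_le_div_of_nonneg_left (abs_nonneg _) hws (wmono s hs x hx' hx.1))
    have h3 : G t / w s - G s / w s ≤ J / w s := by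
      rw [← sub_div]
      apply div_le_div_of_nonneg_right _ hws.le
      linarith [Gmono _ m1 s hs hs.1, Gmono t ht _ m3 ht.2]
    linarith
  obtain ⟨A, hA⟩ : ∃ A, A = N t₂ / w t₂ := ⟨_, rfl⟩
  have yd : ∀ t ∈ Icc t₁ t₃, HasDerivAt (fun t => Real.log (y t)) (y' t / y t) t :=
    fun t ht => (hy t (hsub ht)).log (hypos t (hsub ht)).ne'
  have ld : ∀ t ∈ Icc t₁ t₃,
      HasDerivAt (fun t => Real.log (T - t + lam)) (-1 / (T - t + lam)) t := by
    intro t ht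
    have d2 : HasDerivAt (fun t : ℝ => T - t + lam) (-1) t := by
      simpa using ((hasDerivAt_id t).const_sub T).add_const lam
    exact d2.log (hr t ht).ne'
  have ineq : ∀ t ∈ Icc t₁ t₃, |1/2 * (y' t / y t) + N t| ≤ C₀ / (T - t + lam) + C₁ + S := by
    intro t ht
    have hyt := hypos t (hsub ht)
    have h1 := hineq1 t (hsub ht)
    have e : 1/2 * (y' t / y t) + N t = (1/2 * y' t + N t * y t) / y t := by
      field_simp
    rw [e, abs_div, abs_of_pos hyt, div_le_iff₀ hyt]
    refine h1.trans ?_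
    rw [← add_mul]
    apply mul_le_mul_of_nonneg_right _ hyt.le
    linarith [le_abs_self (F₁ t), hS1 t ht]
  have H1 := mono_aux t₁ t₂ h12.le
    (fun t => t * (J + C₁ + S) - 1/2 * Real.log (y t) - A * W t - C₀ * Real.log (T - t + lam))
    (fun t => 1 * (J + C₁ + S) - 1/2 * (y' t / y t) - A * w t - C₀ * (-1 / (T - t + lam)))
    (fun t ht => by
      have ht' : t ∈ Icc t₁ t₃ := ⟨ht.1, by linarith [ht.2]⟩
      exact ((((hasDerivAt_id t).mul_const _).sub ((yd t ht').const_mul _)).sub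
        ((hWd t ht').const_mul _)).sub ((ld t ht').const_mul _))
    (fun t ht => by
      have ht' : t ∈ Icc t₁ t₃ := ⟨ht.1, by linarith [ht.2]⟩
      have hwt := wpos t ht'
      have h1 := (abs_le.1 (ineq t ht')).2
      have h2 := key t ht' _ m2 ht.2
      rw [← hA, ← add_div, le_div_iff₀ hwt] at h2
      have e : C₀ * (-1 / (T - t + lam)) = - (C₀ / (T - t + lam)) := by ring
      rw [e]
      linarith)
  have H2 := mono_aux t₂ t₃ h23.le
    (fun t => t * (C₁ + S) + 1/2 * Real.log (y t) + (A + J / w t₂) * W t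
      - C₀ * Real.log (T - t + lam))
    (fun t => 1 * (C₁ + S) + 1/2 * (y' t / y t) + (A + J / w t₂) * w t
      - C₀ * (-1 / (T - t + lam)))
    (fun t ht => by
      have ht' : t ∈ Icc t₁ t₃ := ⟨by linarith [ht.1], ht.2⟩
      exact ((((hasDerivAt_id t).mul_const _).add ((yd t ht').const_mul _)).add
        ((hWd t ht').const_mul _)).sub ((ld t ht').const_mul _))
    (fun t ht => by
      have ht' : t ∈ Icc t₁ t₃ := ⟨by linarith [ht.1], ht.2⟩
      have hwt := wpos t ht'
      have h1 := (abs_le.1 (ineq t ht')).1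
      have h2 := key _ m2 t ht' ht.1
      rw [← hA, div_le_iff₀ hwt] at h2
      have e : C₀ * (-1 / (T - t + lam)) = - (C₀ / (T - t + lam)) := by ring
      rw [e]
      linarith)
  have hlog1 : Real.log (T - t₂ + lam) ≤ Real.log (T - t₁ + lam) :=
    Real.log_le_log (hr _ m2) (by linarith)
  have hlog2 : Real.log (T - t₃ + lam) ≤ Real.log (T - t₂ + lam) :=
    Real.log_le_log (hr _ m3) (by linarith)
  have hI2w : (W t₃ - W t₂) / w t₂ ≤ M * (t₂ - t₁) := by
    rw [div_le_iff₀ hw2, ← hMI, mul_assoc]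
    exact mul_le_mul_of_nonneg_left hI1' hM0.le
  have hlen : t₃ - t₂ ≤ M * (t₂ - t₁) := by
    refine le_trans ?_ hI2w
    rwa [le_div_iff₀ hw2]
  have y1 := hypos _ (hsub m1)
  have y2 := hypos _ (hsub m2)
  have y3 := hypos _ (hsub m3)
  have r1 := hr _ m1
  have r3 := hr _ m3
  have q := div_pos r1 r3
  have p1 := Real.rpow_pos_of_pos y1 M
  have p2 := Real.rpow_pos_of_pos q (2 * C₀ * (1 + M))
  have p3 := Real.exp_pos (4 * Dconst T lam C₀ C₁ F₁ F₂ t₁ t₂ t₃)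
  rw [← Real.log_le_log_iff (Real.rpow_pos_of_pos y2 _) (by positivity),
    Real.log_mul (by positivity) p2.ne', Real.log_mul (by positivity) p3.ne',
    Real.log_mul y3.ne' p1.ne', Real.log_exp, Real.log_rpow y2, Real.log_rpow y1,
    Real.log_rpow q, Real.log_div r1.ne' r3.ne', hD]
  generalize Real.log (y t₁) = l1 at *
  generalize Real.log (y t₂) = l2 at *
  generalize Real.log (y t₃) = l3 at *
  generalize Real.log (T - t₁ + lam) = L1 at *
  generalize Real.log (T - t₂ + lam) = L2 at *
  generalize Real.log (T - t₃ + lam) = L3 at *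
  have a1 := mul_le_mul_of_nonneg_left H1 hM0.le
  have a2 : A * (M * (W t₂ - W t₁)) = A * (W t₃ - W t₂) := by rw [hMI]
  have a3 := mul_le_mul_of_nonneg_left hI2w hJ0
  have a4 := mul_le_mul_of_nonneg_left hlen (add_nonneg hC₁ hS0)
  have a5 : J * ((W t₃ - W t₂) / w t₂) = J / w t₂ * (W t₃ - W t₂) := by ring
  have a6 : 0 ≤ C₀ * (M * (L2 - L3)) :=
    mul_nonneg hC₀ (mul_nonneg hM0.le (by linarith))
  have a7 : 0 ≤ C₀ * (L1 - L2) := mul_nonneg hC₀ (by linarith)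
  rw [a5] at a3
  linear_combination 2 * a1 + 2 * H2 - 2 * a2 + 2 * a3 + 2 * a4 + 2 * a6 + 2 * a7

end
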